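/- Let p : ℝ² → ℝ be a polynomial function in two variables (x, z). Then there do not exist a smooth curve c : ℝ → ℝ², a strictly increasing sequence of times (t_n)_{n∈ℕ}, and a strictly increasing sequence of reals (z_n)_{n∈ℕ} such that for every n ∈ ℕ: c(t_n) = (0, z_n) and c'(t_n) = ((−1)^n, 0), while the derivative of t ↦ p(c(t)) is nonzero for every t ∈ ℝ. (Hence a smooth curve in the plane that snakes upwards crossing the line x = 0 horizontally in alternating directions infinitely often cannot be tamed by any polynomial; this follows from the fact that the polynomial z ↦ ∂p/∂x(0, z) would have to change sign infinitely often, contradicting the Fundamental Theorem of Algebra.) -/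

import Mathlib

/-!
Write `f t = P (c t)`. By the chain rule `f' (tₙ) = (-1)ⁿ q(zₙ)`, where `q(z) = ∂P/∂x (0, z)` is a
univariate polynomial (`MvPolynomial.hasDerivAt_eval_comp`). As `f'` is continuous and never zero,
it has constant sign, so `q(zₙ)` and `q(zₙ₊₁)` have opposite signs and `q` has a root strictly
between `zₙ` and `zₙ₊₁`. This produces infinitely many roots of `q`, while `q ≠ 0` because
`q(z₀) ≠ 0`: a contradiction.
-/

/-- Chain rule for a multivariate polynomial along a differentiable curve. -/
theorem MvPolynomial.hasDerivAt_eval_comp {σ : Type*} [Fintype σ] (P : MvPolynomial σ ℝ)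
    {c : ℝ → σ → ℝ} {v : σ → ℝ} {t : ℝ} (hc : HasDerivAt c v t) :
    HasDerivAt (fun s => MvPolynomial.eval (c s) P)
      (∑ i, MvPolynomial.eval (c t) (MvPolynomial.pderiv i P) * v i) t := by
  classical
  induction P using MvPolynomial.induction_on with
  | C a => simpa using hasDerivAt_const t a
  | add p q hp hq =>
    simp only [map_add, add_mul, Finset.sum_add_distrib]
    exact hp.add hq
  | mul_X p j hp =>
    have h := hp.mul (hasDerivAt_pi.1 hc j)
    simp only [map_mul, MvPolynomial.eval_X]
    refine h.congr_deriv ?_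
    simp only [Derivation.leibniz, MvPolynomial.pderiv_X, smul_eq_mul, map_add, map_mul,
      MvPolynomial.eval_X, add_mul, Finset.sum_add_distrib]
    rw [add_comm]
    congr 1
    · simp [Pi.single_apply, apply_ite]
    · rw [Finset.sum_mul]
      exact Finset.sum_congr rfl fun i _ => by ring

/-- A real polynomial whose values alternate in sign along a strictly increasing sequence cannot
exist, since it would have a root in each of infinitely many disjoint intervals. -/
theorem Polynomial.not_alternating_of_strictMono (q : Polynomial ℝ) {z : ℕ → ℝ}
    (hz : StrictMono z) (hq : ∀ n, q.eval (z n) * q.eval (z (n + 1)) < 0) : False := by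
  have root : ∀ n, ∃ r, z n < r ∧ r < z (n + 1) ∧ q.eval r = 0 := by
    intro n
    have hlt := hz (Nat.lt_succ_self n)
    have hcont : ContinuousOn (fun x => q.eval x) (Set.Icc (z n) (z (n + 1))) :=
      q.continuous.continuousOn
    rcases mul_neg_iff.1 (hq n) with ⟨h1, h2⟩ | ⟨h1, h2⟩
    · obtain ⟨r, hr, h⟩ := intermediate_value_Ioo' hlt.le hcont ⟨h2, h1⟩
      exact ⟨r, hr.1, hr.2, h⟩
    · obtain ⟨r, hr, h⟩ := intermediate_value_Ioo hlt.le hcont ⟨h1, h2⟩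
      exact ⟨r, hr.1, hr.2, h⟩
  choose r hr1 hr2 hr using root
  have hmono : StrictMono r := strictMono_nat_of_lt_succ fun n => (hr2 n).trans (hr1 (n + 1))
  have hq0 : q = 0 := q.eq_zero_of_infinite_isRoot
    ((Set.infinite_range_of_injective hmono.injective).mono (by rintro _ ⟨n, rfl⟩; exact hr n))
  simpa [hq0] using hq 0

/-- A smooth plane curve whose "tameness" derivative `d/dt p(c(t))` is nowhere zero cannot
cross the line `x = 0` horizontally with alternating directions at an infinite strictly
increasing sequence of heights: no polynomial tames a curve snaking upwards with
infinitely many turns. -/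
theorem statement18 (P : MvPolynomial (Fin 2) ℝ) :
    ¬ ∃ (c : ℝ → (Fin 2 → ℝ)) (tn zn : ℕ → ℝ),
        ContDiff ℝ (⊤ : ℕ∞) c ∧ StrictMono tn ∧ StrictMono zn ∧
        (∀ n : ℕ, c (tn n) = ![0, zn n]) ∧
        (∀ n : ℕ, deriv c (tn n) = ![(-1 : ℝ) ^ n, 0]) ∧
        (∀ t : ℝ, deriv (fun s => MvPolynomial.eval (c s) P) t ≠ 0) := by
  rintro ⟨c, tn, zn, hc, -, hz, hcn, hdn, hne⟩
  have hderiv : ∀ t, deriv (fun s => MvPolynomial.eval (c s) P) t =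
      ∑ i, MvPolynomial.eval (c t) (MvPolynomial.pderiv i P) * deriv c t i := fun t =>
    (P.hasDerivAt_eval_comp (hc.differentiable (by simp) t).hasDerivAt).deriv
  have hcont : Continuous (deriv fun s => MvPolynomial.eval (c s) P) := by
    rw [funext hderiv]
    have hc' : Continuous (deriv c) := hc.continuous_deriv (by exact_mod_cast le_top)
    exact continuous_finsetSum _ fun i _ =>
      ((MvPolynomial.continuous_eval _).comp hc.continuous).mul ((continuous_apply i).comp hc')
  have hsign : ∀ s t, 0 < deriv (fun s => MvPolynomial.eval (c s) P) s *
      deriv (fun s => MvPolynomial.eval (c s) P) t := by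
    intro s t
    by_contra! h
    have hmem : (0 : ℝ) ∈ Set.range (deriv fun s => MvPolynomial.eval (c s) P) := by
      rcases mul_nonpos_iff.1 h with ⟨h1, h2⟩ | ⟨h1, h2⟩
      · exact mem_range_of_exists_le_of_exists_ge hcont ⟨t, h2⟩ ⟨s, h1⟩
      · exact mem_range_of_exists_le_of_exists_ge hcont ⟨s, h1⟩ ⟨t, h2⟩
    obtain ⟨u, hu⟩ := hmem
    exact hne u hu
  -- `q(z) = ∂P/∂x (0, z)`
  set q : Polynomial ℝ := MvPolynomial.aeval ![0, Polynomial.X] (MvPolynomial.pderiv 0 P) with hqdef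
  have hq : ∀ z, q.eval z = MvPolynomial.eval ![0, z] (MvPolynomial.pderiv 0 P) := by
    intro z
    rw [hqdef, ← Polynomial.coe_aeval_eq_eval, ← MvPolynomial.coe_aeval_eq_eval]
    change Polynomial.aeval z _ = MvPolynomial.aeval _ _
    rw [MvPolynomial.comp_aeval_apply]
    congr 2
    ext i
    fin_cases i <;> simp
  have hval : ∀ n, deriv (fun s => MvPolynomial.eval (c s) P) (tn n) =
      q.eval (zn n) * (-1) ^ n := by
    intro n
    simp [hderiv, hq, hcn, hdn, Fin.sum_univ_two]
  refine q.not_alternating_of_strictMono hz fun n => ?_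
  have h := hsign (tn n) (tn (n + 1))
  rw [hval, hval] at h
  have h1 : ((-1 : ℝ) ^ n) * (-1) ^ n = 1 := by rw [← mul_pow]; simp
  have h2 : q.eval (zn n) * (-1) ^ n * (q.eval (zn (n + 1)) * (-1) ^ (n + 1)) =
      -(q.eval (zn n) * q.eval (zn (n + 1))) := by
    rw [pow_succ]
    linear_combination -(q.eval (zn n) * q.eval (zn (n + 1))) * h1
  linarith
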